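/- Let x, g' ∈ ℝ^d with g' ≠ 0 and let H', M' > 0. If x⁺ ∈ ℝ^d is a global minimizer over y ∈ ℝ^d of the function y ↦ ⟨g', y − x⟩ + (H'/2)‖y − x‖² + (M'/6)‖y − x‖³, then x⁺ = x − 2g' / (H' + √(H'² + 2M'‖g'‖)); moreover ‖x⁺ − x‖ = (√(H'² + 2M'‖g'‖) − H')/M'. -/

import Mathlib

/-!
If `h₀` is a stationary point of the model `m(h) = ⟨g, h⟩ + (H/2)‖h‖² + (M/6)‖h‖³`, that is,
`g = -(H + (M/2)‖h₀‖) h₀`, then `m(h) - m(h₀)` is exactly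
`(H + (M/2)‖h₀‖)/2 · ‖h - h₀‖² + (M/12)(‖h‖ - ‖h₀‖)²(2‖h‖ + ‖h₀‖)`.
Hence a stationary point with `H + (M/2)‖h₀‖ > 0` is the only minimizer, even when `H < 0` and the
model is not convex. Looking for `h₀` along `-g` turns stationarity into the quadratic equation
`(M/2)r² + H r = ‖g‖` for `r = ‖h₀‖`, whose root `(√(H² + 2M‖g‖) - H)/M` gives such a point.
-/

section CubicModel

variable {E : Type*} [NormedAddCommGroup E] [InnerProductSpace ℝ E]

/-- The cubically regularized model, as a function of the displacement `h = y - x`; its quadratic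
term is `H` times the identity. -/
noncomputable def cubicModel (g : E) (H M : ℝ) (h : E) : ℝ :=
  inner ℝ g h + H / 2 * ‖h‖ ^ 2 + M / 6 * ‖h‖ ^ 3

/-- The displacement claimed to minimize `cubicModel g H M`. The denominator is positive when
`g ≠ 0` and `0 < M`, for every real `H`. -/
noncomputable def cubicStep (g : E) (H M : ℝ) : E :=
  -((2 / (H + √(H ^ 2 + 2 * M * ‖g‖))) • g)

theorem cubicModel_sub_of_stationary {g h₀ : E} {H M : ℝ}
    (hstat : g = -((H + M / 2 * ‖h₀‖) • h₀)) (h : E) :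
    cubicModel g H M h - cubicModel g H M h₀ =
      (H + M / 2 * ‖h₀‖) / 2 * ‖h - h₀‖ ^ 2
        + M / 12 * ((‖h‖ - ‖h₀‖) ^ 2 * (2 * ‖h‖ + ‖h₀‖)) := by
  have inner_g (v : E) : inner ℝ g v = -((H + M / 2 * ‖h₀‖) * inner ℝ v h₀) := by
    conv_lhs => rw [hstat, inner_neg_left, real_inner_smul_left, real_inner_comm]
  rw [cubicModel, cubicModel, inner_g, inner_g, real_inner_self_eq_norm_sq, norm_sub_sq_real]
  ring

theorem eq_of_cubicModel_le_of_stationary {g h h₀ : E} {H M : ℝ} (hM : 0 ≤ M)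
    (hcurv : 0 < H + M / 2 * ‖h₀‖) (hstat : g = -((H + M / 2 * ‖h₀‖) • h₀))
    (hle : cubicModel g H M h ≤ cubicModel g H M h₀) : h = h₀ := by
  have hgap := cubicModel_sub_of_stationary hstat h
  have hcubic : 0 ≤ M / 12 * ((‖h‖ - ‖h₀‖) ^ 2 * (2 * ‖h‖ + ‖h₀‖)) := by positivity
  have hdist : ‖h - h₀‖ ^ 2 ≤ 0 :=
    nonpos_of_mul_nonpos_right (by linarith) (half_pos hcurv)
  rwa [sq_nonpos_iff, norm_sub_eq_zero_iff] at hdist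

theorem add_sqrt_sq_add_pos (a : ℝ) {b : ℝ} (hb : 0 < b) : 0 < a + √(a ^ 2 + b) := by
  have : -a < √(a ^ 2 + b) := Real.lt_sqrt_of_sq_lt (by linarith [neg_sq a])
  linarith

theorem norm_cubicStep {g : E} (hg : g ≠ 0) (H : ℝ) {M : ℝ} (hM : 0 < M) :
    ‖cubicStep g H M‖ = (√(H ^ 2 + 2 * M * ‖g‖) - H) / M := by
  have hpos : 0 < H + √(H ^ 2 + 2 * M * ‖g‖) := add_sqrt_sq_add_pos H (by positivity)
  have hsq : √(H ^ 2 + 2 * M * ‖g‖) ^ 2 = H ^ 2 + 2 * M * ‖g‖ := Real.sq_sqrt (by positivity)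
  rw [cubicStep, norm_neg, norm_smul, Real.norm_of_nonneg (by positivity), div_mul_eq_mul_div,
    div_eq_div_iff hpos.ne' hM.ne']
  linear_combination -hsq

theorem add_half_mul_norm_cubicStep {g : E} (hg : g ≠ 0) (H : ℝ) {M : ℝ} (hM : 0 < M) :
    H + M / 2 * ‖cubicStep g H M‖ = (H + √(H ^ 2 + 2 * M * ‖g‖)) / 2 := by
  rw [norm_cubicStep hg H hM]
  field_simp
  ring

theorem cubicStep_stationary {g : E} (hg : g ≠ 0) (H : ℝ) {M : ℝ} (hM : 0 < M) :
    g = -((H + M / 2 * ‖cubicStep g H M‖) • cubicStep g H M) := by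
  have hpos : 0 < H + √(H ^ 2 + 2 * M * ‖g‖) := add_sqrt_sq_add_pos H (by positivity)
  rw [add_half_mul_norm_cubicStep hg H hM, cubicStep, smul_neg, neg_neg, smul_smul,
    div_mul_div_cancel₀' hpos.ne', div_self two_ne_zero, one_smul]

theorem eq_cubicStep_of_cubicModel_le {g h : E} (hg : g ≠ 0) {H M : ℝ} (hM : 0 < M)
    (hle : cubicModel g H M h ≤ cubicModel g H M (cubicStep g H M)) : h = cubicStep g H M := by
  refine eq_of_cubicModel_le_of_stationary hM.le ?_ (cubicStep_stationary hg H hM) hle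
  rw [add_half_mul_norm_cubicStep hg H hM]
  exact half_pos (add_sqrt_sq_add_pos H (by positivity))

theorem cubic_model_explicit_minimizer_general {x g xplus : E} (hg : g ≠ 0) (H : ℝ) {M : ℝ}
    (hM : 0 < M)
    (hmin : ∀ y : E, cubicModel g H M (xplus - x) ≤ cubicModel g H M (y - x)) :
    xplus = x - (2 / (H + √(H ^ 2 + 2 * M * ‖g‖))) • g
    ∧ ‖xplus - x‖ = (√(H ^ 2 + 2 * M * ‖g‖) - H) / M := by
  have hle := hmin (x + cubicStep g H M)
  rw [add_sub_cancel_left] at hle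
  have hstep : xplus - x = cubicStep g H M := eq_cubicStep_of_cubicModel_le hg hM hle
  refine ⟨?_, by rw [hstep, norm_cubicStep hg H hM]⟩
  rw [sub_eq_iff_eq_add'.mp hstep, cubicStep, sub_eq_add_neg]

end CubicModel

/-- Closed-form solution of the cubically regularized model minimization:
if `x⁺` globally minimizes `y ↦ ⟨g', y−x⟩ + (H'/2)‖y−x‖² + (M'/6)‖y−x‖³` with `g' ≠ 0` and
`H', M' > 0`, then `x⁺ = x − 2g'/(H' + √(H'² + 2M'‖g'‖))` and
`‖x⁺ − x‖ = (√(H'² + 2M'‖g'‖) − H')/M'`. -/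
theorem cubic_model_explicit_minimizer
    (d : ℕ) (x g' : EuclideanSpace ℝ (Fin d)) (hg : g' ≠ 0)
    (H' M' : ℝ) (hH : 0 < H') (hM : 0 < M')
    (xplus : EuclideanSpace ℝ (Fin d))
    (hmin : ∀ y : EuclideanSpace ℝ (Fin d),
      (inner ℝ g' (xplus - x) : ℝ) + H' / 2 * ‖xplus - x‖ ^ 2 + M' / 6 * ‖xplus - x‖ ^ 3
        ≤ (inner ℝ g' (y - x) : ℝ) + H' / 2 * ‖y - x‖ ^ 2 + M' / 6 * ‖y - x‖ ^ 3) :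
    xplus = x - (2 / (H' + Real.sqrt (H' ^ 2 + 2 * M' * ‖g'‖))) • g'
    ∧ ‖xplus - x‖ = (Real.sqrt (H' ^ 2 + 2 * M' * ‖g'‖) - H') / M' :=
  cubic_model_explicit_minimizer_general hg H' hM hmin
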